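/- Let (X,ρ) be a metric space, C ⊆ X nonempty closed, θ ∈ C with B(θ,M) ∩ C compact for all M > 0, and T : C → C a continuous paracontraction with a fixed point. If {x_t} ⊆ C satisfies x_{t+1} = T(x_t) for all t, then {x_t} converges to a fixed point of T. -/

import Mathlib

theorem stmt_13 {X : Type*} [MetricSpace X] (C : Set X) (hCne : C.Nonempty)
    (hCcl : IsClosed C) (θ : X) (hθ : θ ∈ C)
    (hcomp : ∀ M > (0:ℝ), IsCompact (Metric.closedBall θ M ∩ C))
    (T : X → X) (hTmaps : Set.MapsTo T C C) (hTcont : ContinuousOn T C)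
    (hpara : ∀ z ∈ C, T z = z → ∀ x ∈ C,
      dist z (T x) ≤ dist z x ∧ (T x ≠ x → dist z (T x) < dist z x))
    (hfix : ∃ z ∈ C, T z = z)
    (x : ℕ → X) (hx : ∀ t, x t ∈ C)
    (hstep : ∀ t, x (t + 1) = T (x t)) :
    ∃ xs ∈ C, T xs = xs ∧ Filter.Tendsto x Filter.atTop (nhds xs) := by
  obtain ⟨z, hz, hTz⟩ := hfix
  have anti : ∀ w ∈ C, T w = w → Antitone (fun t => dist w (x t)) := by
    intro w hw hTw
    refine antitone_nat_of_succ_le fun t => ?_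
    rw [hstep]
    exact (hpara w hw hTw _ (hx t)).1
  have conv : ∀ w ∈ C, T w = w →
      ∃ L, Filter.Tendsto (fun t => dist w (x t)) Filter.atTop (nhds L) := by
    intro w hw hTw
    refine ⟨_, tendsto_atTop_ciInf (anti w hw hTw) ⟨0, ?_⟩⟩
    rintro _ ⟨t, rfl⟩
    exact dist_nonneg
  have hM : (0:ℝ) < dist θ z + dist z (x 0) + 1 := by positivity
  obtain ⟨a, ha, φ, hφ, hlim⟩ := (hcomp _ hM).tendsto_subseq (x := x) (fun t => by
    refine ⟨?_, hx t⟩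
    rw [Metric.mem_closedBall, dist_comm]
    have h1 := dist_triangle θ z (x t)
    have h2 : dist z (x t) ≤ dist z (x 0) := anti z hz hTz (Nat.zero_le t)
    linarith)
  have haC : a ∈ C := ha.2
  obtain ⟨L, hL⟩ := conv z hz hTz
  have e1 : dist z a = L :=
    tendsto_nhds_unique (tendsto_const_nhds.dist hlim) (hL.comp hφ.tendsto_atTop)
  have hT : Filter.Tendsto (fun n => x (φ n + 1)) Filter.atTop (nhds (T a)) := by
    simp only [hstep]
    exact (hTcont a haC).tendsto.comp
      (tendsto_nhdsWithin_iff.2 ⟨hlim, Filter.Eventually.of_forall fun n => hx _⟩)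
  have e2 : dist z (T a) = L :=
    tendsto_nhds_unique (tendsto_const_nhds.dist hT)
      (((Filter.tendsto_add_atTop_iff_nat 1).2 hL).comp hφ.tendsto_atTop)
  have hTa : T a = a := by
    by_contra h
    have := (hpara z hz hTz a haC).2 h
    linarith
  refine ⟨a, haC, hTa, ?_⟩
  obtain ⟨K, hK⟩ := conv a haC hTa
  have e3 : dist a a = K :=
    tendsto_nhds_unique (tendsto_const_nhds.dist hlim) (hK.comp hφ.tendsto_atTop)
  rw [dist_self] at e3
  rw [tendsto_iff_dist_tendsto_zero, e3]
  simpa only [dist_comm] using hK
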